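/- Let K be a flag simplicial complex with a base vertex v_0. If there exists a remoteness function r for v_0 on the set of vertices of K that admits a blocking function b, then K is contractible. -/

import Mathlib

/-!
The complex is built up along the remoteness function.  Call a complex *compactly null*
(`CompactlyNull`) if every map from a compact space to its realization is null-homotopic; for this
it suffices to contract the finite full subcomplexes (`compactlyNull_of_finite`).

* The vertices of remoteness `0` span a compactly null complex: finitely many of them lie in the
  star of `v₀`, and since none of them can be replaced by a less remote vertex, the blocking
  function allows `v₀` to be traded for a common neighbour of remoteness `0` (`exists_center`),
  with which they span a cone.
* Vertices `v` of remoteness `n + 1` are attached one at a time to the vertices of lower remoteness.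
  As `K` is flag, this glues on a cone over a part of the link of `v`, and the result is
  compactly null if that part of the link is (`compactlyNull_insert`).  A finite subcomplex of the
  link is contracted inside it by the blocking function: replacing a vertex as in the blocked
  case yields a contiguous, hence homotopic, simplicial map with smaller blocking number, and in
  the unblocked case the image lies in the star of a vertex of the link of lower remoteness
  (`nullhomotopic_link_map`).
* A compact set involves only finitely many vertices up to homotopy, so `K` itself is compactly null
  (`compactlyNull_of_blocking`).

The passage from compactly null to contractible (`CompactlyNull.contractible`) is the skeletal
construction of a contraction: a homotopy given on the boundary of a prism over a simplex extends
over the prism (`CompactlyNull.exists_extension`).  The resulting map is continuous on each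
prism only, whereas the realization carries the topology of coordinatewise convergence.  The gap is
bridged by a self-map of the realization, homotopic to the identity, that sends a neighbourhood of
each point into a single closed simplex (`exists_localizing`).  The same map pushes compact sets
into finite subcomplexes.
-/

open Classical

noncomputable section

/-! ## Abstract simplicial complexes, geometric realization, contractibility -/

/-- An abstract simplicial complex on the vertex type `V`: a collection of nonempty finite
sets of vertices (the simplices, or faces) closed under passing to nonempty subsets.
A face of cardinality `k + 1` is a `k`-simplex. -/
structure SimpComplex (V : Type) where
  faces : Set (Finset V)
  not_empty_mem : ∅ ∉ faces
  down_closed : ∀ {s t : Finset V}, s ∈ faces → t ⊆ s → t.Nonempty → t ∈ faces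

namespace SimpComplex

variable {V V' : Type}

/-- the vertices of the complex -/
def vertexSet (K : SimpComplex V) : Set V := {v | {v} ∈ K.faces}

/-- The geometric realization of the complex, as a subspace of the product space `ℝ^V`:
the set of convex-combination functions supported on a face. -/
def realization (K : SimpComplex V) : Set (V → ℝ) :=
  {f | (∀ v, 0 ≤ f v) ∧ ∃ s ∈ K.faces, (∀ v, v ∉ s → f v = 0) ∧ ∑ v ∈ s, f v = 1}

/-- A simplicial complex is contractible if its geometric realization is a contractible
topological space. -/
def Contractible (K : SimpComplex V) : Prop :=
  ContractibleSpace ↥(K.realization)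

/-- `w` is adjacent to `v`: `w` equals `v` or `w` is joined to `v` by an edge. -/
def Adjacent (K : SimpComplex V) (v w : V) : Prop :=
  v = w ∨ ({v, w} : Finset V) ∈ K.faces

/-- A flag complex: any collection of pairwise distinct `k + 1` vertices spans a `k`-simplex
whenever any two of them span a `1`-simplex. -/
def IsFlag (K : SimpComplex V) : Prop :=
  ∀ s : Finset V, s.Nonempty → (∀ v ∈ s, ({v} : Finset V) ∈ K.faces) →
    (∀ v ∈ s, ∀ w ∈ s, v ≠ w → ({v, w} : Finset V) ∈ K.faces) → s ∈ K.faces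

/-- the full subcomplex spanned by a set `S` of vertices -/
def fullSub (K : SimpComplex V) (S : Set V) : SimpComplex V where
  faces := {s | s ∈ K.faces ∧ ∀ v ∈ s, v ∈ S}
  not_empty_mem := fun h => K.not_empty_mem h.1
  down_closed := by
    intro s t hs hts hne
    exact ⟨K.down_closed hs.1 hts hne, fun v hv => hs.2 v (hts hv)⟩

/-- the complex has dimension `d`: every face is a simplex of dimension at most `d`, and some
face is a `d`-simplex -/
def DimEq (K : SimpComplex V) (d : ℕ) : Prop :=
  (∀ s ∈ K.faces, s.card ≤ d + 1) ∧ ∃ s ∈ K.faces, s.card = d + 1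

/-- a simplicial isomorphism between two complexes -/
def Iso (K : SimpComplex V) (K' : SimpComplex V') : Prop :=
  ∃ e : V ≃ V', ∀ s : Finset V, s ∈ K.faces ↔ s.map e.toEmbedding ∈ K'.faces

/-- `(X, v)` is an adjacency pair: `X` is a finite multiset of vertices of the star of the
vertex `v`, i.e. of vertices adjacent to `v`. -/
def AdjPair (K : SimpComplex V) (X : Multiset V) (v : V) : Prop :=
  ({v} : Finset V) ∈ K.faces ∧ ∀ x ∈ X, K.Adjacent v x

/-- `r` is a remoteness function for the vertex `v₀`: a function from the vertices of `K` to
the non-negative integers with `r⁻¹(0) ⊆ st(v₀)`. -/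
def IsRemoteness (K : SimpComplex V) (v₀ : V) (r : V → ℕ) : Prop :=
  ∀ v, ({v} : Finset V) ∈ K.faces → r v = 0 → K.Adjacent v₀ v

/-- `b` is a blocking function for the remoteness function `r`. -/
def IsBlocking (K : SimpComplex V) (r : V → ℕ) (b : Multiset V → V → ℕ) : Prop :=
  ∀ X v, K.AdjPair X v → 0 < r v →
    (b X v = 0 → ∃ w, w ≠ v ∧ ({v, w} : Finset V) ∈ K.faces ∧ r w < r v ∧ K.AdjPair X w) ∧
    (0 < b X v → ∃ v' ∈ X, ∃ w', w' ≠ v' ∧ ({v', w'} : Finset V) ∈ K.faces ∧ r w' < r v' ∧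
      (∀ x ∈ X, K.Adjacent v' x → K.Adjacent w' x) ∧ b (w' ::ₘ X.erase v') v < b X v)

end SimpComplex

open Filter Topology unitInterval

namespace SimpComplex

variable {V : Type}

/-! ### Closed simplices and straight-line homotopies -/

/-- The closed geometric simplex in `V → ℝ` spanned by a finite vertex set `s`
(empty when `s` is empty). -/
def simplex (s : Finset V) : Set (V → ℝ) :=
  {f | (∀ v, 0 ≤ f v) ∧ (∀ v, v ∉ s → f v = 0) ∧ ∑ v ∈ s, f v = 1}

lemma mem_realization {K : SimpComplex V} {f : V → ℝ} :
    f ∈ K.realization ↔ ∃ s ∈ K.faces, f ∈ simplex s := by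
  constructor
  · rintro ⟨h0, s, hs, h1, h2⟩
    exact ⟨s, hs, h0, h1, h2⟩
  · rintro ⟨s, hs, h0, h1, h2⟩
    exact ⟨h0, s, hs, h1, h2⟩

lemma simplex_mono {s t : Finset V} (h : s ⊆ t) : simplex s ⊆ simplex t := by
  rintro f ⟨h0, h1, h2⟩
  refine ⟨h0, fun v hv => h1 v fun hs => hv (h hs), ?_⟩
  rw [← h2]
  exact (Finset.sum_subset h fun v _ hv => h1 v hv).symm

lemma convex_simplex (s : Finset V) : Convex ℝ (simplex s) := by
  rintro f ⟨f0, f1, f2⟩ g ⟨g0, g1, g2⟩ a b ha hb hab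
  refine ⟨fun v => ?_, fun v hv => ?_, ?_⟩
  · have := mul_nonneg ha (f0 v)
    have := mul_nonneg hb (g0 v)
    simp only [Pi.add_apply, Pi.smul_apply, smul_eq_mul]
    linarith
  · simp [f1 v hv, g1 v hv]
  · simp only [Pi.add_apply, Pi.smul_apply, smul_eq_mul]
    rw [Finset.sum_add_distrib, ← Finset.mul_sum, ← Finset.mul_sum, f2, g2]
    linarith

lemma isClosed_simplex (s : Finset V) : IsClosed (simplex s) := by
  have : simplex s = (⋂ v, {f : V → ℝ | 0 ≤ f v}) ∩
      ((⋂ v, ⋂ (_ : v ∉ s), {f : V → ℝ | f v = 0}) ∩ {f | ∑ v ∈ s, f v = 1}) := by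
    ext f
    simp [simplex]
  rw [this]
  refine (isClosed_iInter fun v => isClosed_le continuous_const (continuous_apply v)).inter
    ((isClosed_iInter fun v => isClosed_iInter fun _ =>
      isClosed_eq (continuous_apply v) continuous_const).inter ?_)
  exact isClosed_eq (by fun_prop) continuous_const

lemma simplex_le_one {s : Finset V} {f : V → ℝ} (hf : f ∈ simplex s) (v : V) : f v ≤ 1 := by
  obtain ⟨h0, h1, h2⟩ := hf
  by_cases hv : v ∈ s
  · rw [← h2]
    exact Finset.single_le_sum (fun w _ => h0 w) hv
  · rw [h1 v hv]
    norm_num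

lemma isCompact_simplex (s : Finset V) : IsCompact (simplex s) := by
  refine IsCompact.of_isClosed_subset
    (isCompact_univ_pi fun _ : V => isCompact_Icc (a := (0 : ℝ)) (b := 1))
    (isClosed_simplex s) ?_
  intro f hf v _
  exact ⟨hf.1 v, simplex_le_one hf v⟩

lemma single_mem_simplex {s : Finset V} {v : V} (hv : v ∈ s) :
    (Pi.single v 1 : V → ℝ) ∈ simplex s := by
  refine ⟨fun w => ?_, fun w hw => ?_, ?_⟩
  · by_cases h : w = v
    · subst h; simp
    · simp [Pi.single_eq_of_ne h]
  · refine Pi.single_eq_of_ne ?_ _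
    rintro rfl
    exact hw hv
  · simp [Finset.sum_pi_single', hv]

lemma simplex_nonempty_of_mem {s : Finset V} {x : V → ℝ} (hx : x ∈ simplex s) : s.Nonempty := by
  rw [Finset.nonempty_iff_ne_empty]
  rintro rfl
  simpa using hx.2.2

/-- Every point of a closed simplex is interior to one of its faces, its carrier. -/
lemma exists_carrier {s : Finset V} {x : V → ℝ} (hx : x ∈ simplex s) :
    ∃ t ⊆ s, x ∈ simplex t ∧ ∀ v ∈ t, 0 < x v := by
  refine ⟨s.filter fun v => 0 < x v, Finset.filter_subset _ _, ⟨hx.1, fun v hv => ?_, ?_⟩, ?_⟩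
  · by_contra h
    have hpos : 0 < x v := lt_of_le_of_ne (hx.1 v) (Ne.symm h)
    refine hv (Finset.mem_filter.2 ⟨?_, hpos⟩)
    by_contra hs
    exact h (hx.2.1 v hs)
  · rw [← hx.2.2]
    refine Finset.sum_subset (Finset.filter_subset _ _) fun v hv hv' => ?_
    by_contra h
    exact hv' (Finset.mem_filter.2 ⟨hv, lt_of_le_of_ne (hx.1 v) (Ne.symm h)⟩)
  · intro v hv
    exact (Finset.mem_filter.1 hv).2

lemma carrier_subset {s t : Finset V} {x : V → ℝ} (ht : ∀ v ∈ t, 0 < x v)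
    (hx : x ∈ simplex s) : t ⊆ s := by
  intro v hv
  by_contra h
  exact (ht v hv).ne' (hx.2.1 v h)

lemma sum_le_one {K : SimpComplex V} {y : V → ℝ} (hy : y ∈ K.realization) (s : Finset V) :
    ∑ v ∈ s, y v ≤ 1 := by
  obtain ⟨t, _, ht⟩ := mem_realization.1 hy
  rw [← (simplex_mono (Finset.subset_union_right (s₁ := s)) ht).2.2]
  exact Finset.sum_le_sum_of_subset_of_nonneg Finset.subset_union_left fun v _ _ => ht.1 v

/-- Two maps into a realization are homotopic if at each point their values lie in a common
closed simplex. -/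
lemma homotopic_of_common_simplex {K : SimpComplex V} {Z : Type} [TopologicalSpace Z]
    (f g : C(Z, K.realization))
    (h : ∀ z, ∃ s ∈ K.faces, (f z : V → ℝ) ∈ simplex s ∧ (g z : V → ℝ) ∈ simplex s) :
    f.Homotopic g := by
  refine ⟨⟨⟨fun p => ⟨(1 - (p.1 : ℝ)) • (f p.2 : V → ℝ) + (p.1 : ℝ) • (g p.2 : V → ℝ), ?_⟩, ?_⟩,
    ?_, ?_⟩⟩
  · obtain ⟨s, hs, h1, h2⟩ := h p.2
    exact mem_realization.2 ⟨s, hs, convex_simplex s h1 h2 (by linarith [p.1.2.2]) p.1.2.1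
      (by ring)⟩
  · fun_prop
  · intro z
    ext
    simp
  · intro z
    ext
    simp

/-- The map of realizations induced by an inclusion of complexes. -/
def inclMap {K K' : SimpComplex V} (h : K.faces ⊆ K'.faces) : C(K.realization, K'.realization) where
  toFun x := ⟨x.1, by
    obtain ⟨s, hs, hx⟩ := mem_realization.1 x.2
    exact mem_realization.2 ⟨s, h hs, hx⟩⟩
  continuous_toFun := by fun_prop

lemma fullSub_faces_subset (K : SimpComplex V) (S : Set V) : (K.fullSub S).faces ⊆ K.faces :=
  fun _ h => h.1

/-! ### Pushing compact sets into finite subcomplexes -/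

/-- Coordinatewise convergence in a realization is automatically uniform over all
coordinates. -/
lemma eventually_uniform {K : SimpComplex V} {x : V → ℝ} (hx : x ∈ K.realization) {ε : ℝ}
    (hε : 0 < ε) : ∀ᶠ y in 𝓝[K.realization] x, ∀ v, |y v - x v| ≤ ε := by
  obtain ⟨s, hs, hxs⟩ := mem_realization.1 hx
  set δ : ℝ := ε / (s.card + 1) with hδ
  have hδ0 : 0 < δ := by positivity
  have hδε : (s.card : ℝ) * δ + δ = ε := by
    rw [hδ]; field_simp
  have h1 : ∀ᶠ y in 𝓝[K.realization] x, ∀ v ∈ s, |y v - x v| < δ := by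
    refine (Filter.eventually_all_finset s).2 fun v _ => ?_
    have hc : Tendsto (fun y : V → ℝ => |y v - x v|) (𝓝[K.realization] x) (𝓝 |x v - x v|) := by
      apply Continuous.continuousWithinAt (f := fun y : V → ℝ => |y v - x v|)
      fun_prop
    rw [sub_self, abs_zero] at hc
    exact hc.eventually (gt_mem_nhds hδ0)
  filter_upwards [h1, self_mem_nhdsWithin] with y hy hyK v
  by_cases hv : v ∈ s
  · have := hy v hv
    have : 0 ≤ (s.card : ℝ) * δ := by positivity
    linarith
  · have h2 := sum_le_one hyK (insert v s)
    rw [Finset.sum_insert hv] at h2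
    have h3 : ∑ w ∈ s, x w - ∑ w ∈ s, y w ≤ s.card * δ := by
      rw [← Finset.sum_sub_distrib, ← nsmul_eq_mul]
      refine Finset.sum_le_card_nsmul _ _ _ fun w hw => ?_
      have := (abs_lt.1 (hy w hw)).1
      linarith
    rw [hxs.2.2] at h3
    rw [hxs.2.1 v hv, sub_zero, abs_of_nonneg (hyK.1 v)]
    linarith

/-- The largest barycentric coordinate of a point of a realization. -/
def peak (x : V → ℝ) : ℝ := ⨆ v, x v

/-- The coordinates of `x`, each lowered by half of the largest one and cut off at `0`. -/
def damp (x : V → ℝ) (v : V) : ℝ := max 0 (x v - peak x / 2)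

/-- `damp x`, normalized to have coordinate sum `1`. -/
def push (x : V → ℝ) (v : V) : ℝ := damp x v / ∑ᶠ w, damp x w

lemma le_peak {K : SimpComplex V} {x : V → ℝ} (hx : x ∈ K.realization) (v : V) :
    x v ≤ peak x := by
  obtain ⟨s, _, hs⟩ := mem_realization.1 hx
  exact le_ciSup (f := x) ⟨1, by rintro _ ⟨w, rfl⟩; exact simplex_le_one hs w⟩ v

lemma peak_pos {K : SimpComplex V} {x : V → ℝ} (hx : x ∈ K.realization) : 0 < peak x := by
  obtain ⟨s, _, hs⟩ := mem_realization.1 hx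
  obtain ⟨t, _, ht, hpos⟩ := exists_carrier hs
  obtain ⟨v, hv⟩ := simplex_nonempty_of_mem ht
  exact (hpos v hv).trans_le (le_peak hx v)

lemma push_mem_simplex {K : SimpComplex V} {y : V → ℝ} (hy : y ∈ K.realization) {s : Finset V}
    (h : ∀ v, v ∉ s → damp y v = 0) :
    push y ∈ simplex s ∧ ∑ᶠ w, damp y w = ∑ w ∈ s, damp y w ∧ 0 < ∑ w ∈ s, damp y w := by
  have hsum : ∑ᶠ w, damp y w = ∑ w ∈ s, damp y w := by
    refine finsum_eq_sum_of_support_subset _ fun v hv => ?_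
    by_contra hvs
    exact hv (h v hvs)
  have h0 : ∀ v, 0 ≤ damp y v := fun v => le_max_left _ _
  have hpos : 0 < ∑ w ∈ s, damp y w := by
    have hp := peak_pos hy
    obtain ⟨s', _, hs'⟩ := mem_realization.1 hy
    obtain ⟨v', _⟩ := simplex_nonempty_of_mem hs'
    have : Nonempty V := ⟨v'⟩
    obtain ⟨v, hv⟩ : ∃ v, peak y / 2 < y v := exists_lt_of_lt_ciSup (by
      change peak y / 2 < peak y
      linarith)
    have hd : 0 < damp y v := lt_max_of_lt_right (by linarith)
    have hvs : v ∈ s := by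
      by_contra hvs
      exact hd.ne' (h v hvs)
    exact Finset.sum_pos' (fun w _ => h0 w) ⟨v, hvs, hd⟩
  refine ⟨⟨fun v => ?_, fun v hv => ?_, ?_⟩, hsum, hpos⟩
  · exact div_nonneg (h0 v) (hsum ▸ hpos.le)
  · simp [push, h v hv]
  · simp only [push]
    rw [hsum, ← Finset.sum_div, div_self hpos.ne']

lemma damp_eq_zero {K : SimpComplex V} {y : V → ℝ} (hy : y ∈ K.realization) {s : Finset V}
    (hs : y ∈ simplex s) (v : V) (hv : v ∉ s) : damp y v = 0 := by
  have := peak_pos hy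
  rw [damp, hs.2.1 v hv]
  exact max_eq_left (by linarith)

lemma tendsto_peak {K : SimpComplex V} {x : V → ℝ} (hx : x ∈ K.realization) :
    Tendsto peak (𝓝[K.realization] x) (𝓝 (peak x)) := by
  rw [Metric.tendsto_nhds]
  intro ε hε
  obtain ⟨s', _, hs'⟩ := mem_realization.1 hx
  obtain ⟨v', _⟩ := simplex_nonempty_of_mem hs'
  have : Nonempty V := ⟨v'⟩
  filter_upwards [eventually_uniform hx (half_pos hε), self_mem_nhdsWithin] with y hy hyK
  have h1 : peak y ≤ peak x + ε / 2 := ciSup_le fun v => by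
    linarith [(abs_le.1 (hy v)).2, le_peak hx v]
  have h2 : peak x ≤ peak y + ε / 2 := ciSup_le fun v => by
    linarith [(abs_le.1 (hy v)).1, le_peak hyK v]
  rw [Real.dist_eq, abs_lt]
  constructor <;> linarith

lemma eventually_damp_eq_zero {K : SimpComplex V} {x : V → ℝ} (hx : x ∈ K.realization)
    {s : Finset V} (hs : x ∈ simplex s) :
    ∀ᶠ y in 𝓝[K.realization] x, ∀ v, v ∉ s → damp y v = 0 := by
  have hp := peak_pos hx
  have h1 : ∀ᶠ y in 𝓝[K.realization] x, peak x / 2 < peak y :=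
    (tendsto_peak hx).eventually (lt_mem_nhds (by linarith))
  filter_upwards [eventually_uniform hx (ε := peak x / 8) (by linarith), h1] with y hy hpy v hv
  have := (abs_le.1 (hy v)).2
  rw [hs.2.1 v hv] at this
  exact max_eq_left (by linarith)

/-- A self-map of the realization preserving every closed simplex and mapping a neighbourhood of
each point into a single closed simplex.  It factors continuously through the weak topology, so
homotopies only need to be continuous simplex by simplex. -/
lemma exists_localizing (K : SimpComplex V) : ∃ g : C(K.realization, K.realization),
    (∀ x : K.realization, ∀ s : Finset V, (x : V → ℝ) ∈ simplex s → (g x : V → ℝ) ∈ simplex s) ∧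
    ∀ x, ∃ s ∈ K.faces, ∀ᶠ y in 𝓝 x, (g y : V → ℝ) ∈ simplex s := by
  have hmem : ∀ x : K.realization, ∀ s : Finset V, (x : V → ℝ) ∈ simplex s →
      push (x : V → ℝ) ∈ simplex s := fun x s hs =>
    (push_mem_simplex x.2 (damp_eq_zero x.2 hs)).1
  have hloc : ∀ x : K.realization, ∀ s : Finset V, (x : V → ℝ) ∈ simplex s →
      ∀ᶠ y : K.realization in 𝓝 x, ∀ v, v ∉ s → damp (y : V → ℝ) v = 0 := by
    intro x s hs
    have := eventually_damp_eq_zero x.2 hs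
    rw [nhdsWithin_eq_map_subtype_coe x.2] at this
    exact this
  refine ⟨⟨fun x => ⟨push x, ?_⟩, ?_⟩, hmem, ?_⟩
  · obtain ⟨s, hs, hxs⟩ := mem_realization.1 x.2
    exact mem_realization.2 ⟨s, hs, hmem x s hxs⟩
  · refine Continuous.subtype_mk (continuous_pi fun v => continuous_iff_continuousAt.2 fun x => ?_) _
    obtain ⟨s, hs, hxs⟩ := mem_realization.1 x.2
    have hpk : Tendsto (fun y : K.realization => peak (y : V → ℝ)) (𝓝 x)
        (𝓝 (peak (x : V → ℝ))) := by
      have := tendsto_peak x.2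
      rw [nhdsWithin_eq_map_subtype_coe x.2] at this
      exact this
    have hd : ∀ w, Tendsto (fun y : K.realization => damp (y : V → ℝ) w) (𝓝 x)
        (𝓝 (damp (x : V → ℝ) w)) := fun w =>
      tendsto_const_nhds.max (Tendsto.sub
        (((continuous_apply w).comp continuous_subtype_val).continuousAt) (hpk.div_const 2))
    have hx0 := push_mem_simplex x.2 (damp_eq_zero x.2 hxs)
    have hq : Tendsto (fun y : K.realization => damp (y : V → ℝ) v / ∑ w ∈ s, damp (y : V → ℝ) w)
        (𝓝 x) (𝓝 (push (x : V → ℝ) v)) := by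
      rw [push, hx0.2.1]
      exact (hd v).div (tendsto_finsetSum _ fun w _ => hd w) hx0.2.2.ne'
    refine hq.congr' ?_
    filter_upwards [hloc x s hxs] with y hy
    rw [push, (push_mem_simplex y.2 hy).2.1]
  · intro x
    obtain ⟨s, hs, hxs⟩ := mem_realization.1 x.2
    refine ⟨s, hs, ?_⟩
    filter_upwards [hloc x s hxs] with y hy
    exact (push_mem_simplex y.2 hy).1

/-- Every map from a compact space to the realization of `K` is null-homotopic. -/
def CompactlyNull (K : SimpComplex V) : Prop :=
  ∀ (Z : Type) [TopologicalSpace Z] [CompactSpace Z] (f : C(Z, K.realization)), f.Nullhomotopic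

/-- It suffices to contract the finite full subcomplexes. -/
lemma compactlyNull_of_finite (K : SimpComplex V)
    (h : ∀ F : Finset V, (inclMap (K.fullSub_faces_subset (F : Set V))).Nullhomotopic) :
    K.CompactlyNull := by
  intro Z _ _ f
  obtain ⟨g, hg, hgl⟩ := exists_localizing K
  choose s hsK hs using hgl
  obtain ⟨t, ht⟩ := CompactSpace.elim_nhds_subcover
    (fun z => {y : Z | (g (f y) : V → ℝ) ∈ simplex (s (f z))})
    (fun z => (f.continuous.tendsto z).eventually (hs (f z)))
  let F : Finset V := t.biUnion fun z => s (f z)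
  have hF : ∀ z, (g (f z) : V → ℝ) ∈ (K.fullSub (F : Set V)).realization := by
    intro z
    have hz : z ∈ ⋃ x ∈ t, {y : Z | (g (f y) : V → ℝ) ∈ simplex (s (f x))} := by
      rw [ht]; trivial
    simp only [Set.mem_iUnion] at hz
    obtain ⟨x, hx, hz⟩ := hz
    exact mem_realization.2 ⟨s (f x), ⟨hsK _, fun v hv => Finset.mem_coe.2
      (Finset.mem_biUnion.2 ⟨x, hx, hv⟩)⟩, hz⟩
  have h1 : f.Homotopic (g.comp f) := homotopic_of_common_simplex _ _ fun z => by
    obtain ⟨s, hs, hz⟩ := mem_realization.1 (f z).2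
    exact ⟨s, hs, hz, hg _ _ hz⟩
  let f' : C(Z, (K.fullSub (F : Set V)).realization) :=
    ⟨fun z => ⟨g (f z), hF z⟩, by fun_prop⟩
  have h2 : g.comp f = (inclMap (K.fullSub_faces_subset (F : Set V))).comp f' := rfl
  obtain ⟨y, hy⟩ := (h F).comp_left f'
  exact ⟨y, h1.trans (h2 ▸ hy)⟩

/-- The null-homotopies supplied by `CompactlyNull` for a map defined on a compact subset `B`, as a
family of functions on the ambient space; the time parameter is clamped to `[0, 1]`. -/
lemma CompactlyNull.exists_family {K : SimpComplex V} (hK : K.CompactlyNull) {X : Type}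
    [TopologicalSpace X] {B : Set X} (hB : IsCompact B) {f : X → V → ℝ} (hf : ContinuousOn f B)
    (hfK : ∀ z ∈ B, f z ∈ K.realization) :
    ∃ c ∈ K.realization, ∃ η : X → ℝ → V → ℝ,
      ContinuousOn (fun p : X × ℝ => η p.1 p.2) (Prod.fst ⁻¹' B) ∧
      ∀ z ∈ B, η z 0 = f z ∧ η z 1 = c ∧ ∀ u, η z u ∈ K.realization := by
  have : CompactSpace B := isCompact_iff_compactSpace.1 hB
  let x : C(B, K.realization) :=
    ⟨fun z => ⟨f z, hfK z z.2⟩, Continuous.subtype_mk hf.domRestrict _⟩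
  obtain ⟨c, ⟨h⟩⟩ := hK B x
  let η : X → ℝ → (V → ℝ) := fun z u =>
    if hz : z ∈ B then (h (Set.projIcc 0 1 zero_le_one u, ⟨z, hz⟩) : V → ℝ) else 0
  have hη : ∀ z (hz : z ∈ B) u,
      η z u = (h (Set.projIcc 0 1 zero_le_one u, ⟨z, hz⟩) : V → ℝ) := fun z hz u => dif_pos hz
  refine ⟨c, c.2, η, ?_, fun z hz => ⟨?_, ?_, fun u => ?_⟩⟩
  · rw [continuousOn_iff_continuous_domRestrict]
    have : (Prod.fst ⁻¹' B).domRestrict (fun p : X × ℝ => η p.1 p.2) =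
        fun p : (Prod.fst ⁻¹' B : Set (X × ℝ)) =>
          (h (Set.projIcc 0 1 zero_le_one p.1.2, ⟨p.1.1, p.2⟩) : V → ℝ) := by
      funext p
      exact hη p.1.1 p.2 p.1.2
    rw [this]
    have hproj : Continuous (Set.projIcc (0 : ℝ) 1 zero_le_one) := continuous_projIcc
    exact continuous_subtype_val.comp (h.continuous.comp
      ((hproj.comp (continuous_snd.comp continuous_subtype_val)).prodMk
        (Continuous.subtype_mk (continuous_fst.comp continuous_subtype_val) _)))
  · rw [hη z hz, Set.projIcc_left]
    exact congrArg Subtype.val (h.apply_zero ⟨z, hz⟩)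
  · rw [hη z hz, Set.projIcc_right]
    exact congrArg Subtype.val (h.apply_one ⟨z, hz⟩)
  · rw [hη z hz]
    exact (h _).2

/-! ### Attaching a vertex along its link -/

lemma Adjacent.symm {K : SimpComplex V} {v w : V} (h : K.Adjacent v w) : K.Adjacent w v := by
  rcases h with h | h
  · exact Or.inl h.symm
  · right
    rwa [Finset.pair_comm]

lemma vertex_mem {K : SimpComplex V} {s : Finset V} (hs : s ∈ K.faces) {v : V} (hv : v ∈ s) :
    ({v} : Finset V) ∈ K.faces :=
  K.down_closed hs (Finset.singleton_subset_iff.2 hv) (Finset.singleton_nonempty v)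

lemma adjacent_of_mem_face {K : SimpComplex V} {s : Finset V} (hs : s ∈ K.faces) {v w : V}
    (hv : v ∈ s) (hw : w ∈ s) : K.Adjacent v w := by
  right
  refine K.down_closed hs ?_ ⟨v, by simp⟩
  intro x hx
  rcases Finset.mem_insert.1 hx with rfl | hx
  · exact hv
  · rwa [Finset.mem_singleton.1 hx]

lemma IsFlag.face_of_adjacent {K : SimpComplex V} (hflag : K.IsFlag) {s : Finset V}
    (hne : s.Nonempty) (hv : ∀ v ∈ s, ({v} : Finset V) ∈ K.faces)
    (h : ∀ v ∈ s, ∀ w ∈ s, K.Adjacent v w) : s ∈ K.faces :=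
  hflag s hne hv fun v hvs w hws hvw => (h v hvs w hws).resolve_left hvw

lemma IsFlag.insert_face {K : SimpComplex V} (hflag : K.IsFlag) {s : Finset V}
    (hs : s ∈ K.faces) {v : V} (hv : ({v} : Finset V) ∈ K.faces)
    (h : ∀ w ∈ s, K.Adjacent v w) : insert v s ∈ K.faces := by
  refine hflag.face_of_adjacent (Finset.insert_nonempty v s) ?_ ?_
  · intro w hw
    rcases Finset.mem_insert.1 hw with rfl | hw
    · exact hv
    · exact vertex_mem hs hw
  · intro w hw x hx
    rcases Finset.mem_insert.1 hw with rfl | hw' <;> rcases Finset.mem_insert.1 hx with rfl | hx'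
    · exact Or.inl rfl
    · exact h x hx'
    · exact (h w hw').symm
    · exact adjacent_of_mem_face hs hw' hx'

/-- The vertices of the link of `v`. -/
def linkSet (K : SimpComplex V) (v : V) : Set V := {w | w ≠ v ∧ ({v, w} : Finset V) ∈ K.faces}

/-- The projection of a simplex from its vertex `v` to the opposite face. -/
def dropVertex (v : V) (y : V → ℝ) (w : V) : ℝ := if w = v then 0 else y w / (1 - y v)

lemma dropVertex_mem {v : V} {y : V → ℝ} {s : Finset V} (hy : y ∈ simplex s) (h : y v < 1) :
    dropVertex v y ∈ simplex (s.erase v) := by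
  refine ⟨fun w => ?_, fun w hw => ?_, ?_⟩
  · unfold dropVertex
    split_ifs
    · exact le_rfl
    · exact div_nonneg (hy.1 w) (by linarith)
  · unfold dropVertex
    split_ifs with hwv
    · rfl
    · rw [hy.2.1 w fun hs => hw (Finset.mem_erase.2 ⟨hwv, hs⟩), zero_div]
  · have h1 : ∑ w ∈ s.erase v, dropVertex v y w = (∑ w ∈ s.erase v, y w) / (1 - y v) := by
      rw [Finset.sum_div]
      refine Finset.sum_congr rfl fun w hw => ?_
      rw [dropVertex, if_neg (Finset.ne_of_mem_erase hw)]
    have h2 : ∑ w ∈ s.erase v, y w = 1 - y v := by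
      by_cases hv : v ∈ s
      · rw [← hy.2.2, ← Finset.add_sum_erase s y hv]
        ring
      · rw [Finset.erase_eq_of_notMem hv, hy.2.2, hy.2.1 v hv, sub_zero]
    rw [h1, h2, div_self (by linarith)]

lemma dropVertex_of_eq_zero {v : V} {y : V → ℝ} (h : y v = 0) : dropVertex v y = y := by
  funext w
  unfold dropVertex
  split_ifs with hw
  · rw [hw, h]
  · rw [h, sub_zero, div_one]

/-- Gluing of three maps given on the members of a closed cover. -/
lemma exists_glue {Z Y : Type} [TopologicalSpace Z] [TopologicalSpace Y] {A B C : Set Z}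
    (hA : IsClosed A) (hB : IsClosed B) (hC : IsClosed C) (hcov : ∀ z, z ∈ A ∨ z ∈ B ∨ z ∈ C)
    {a b c : Z → Y} (ha : ContinuousOn a A) (hb : ContinuousOn b B) (hc : ContinuousOn c C)
    (hab : ∀ z ∈ A, z ∈ B → a z = b z) (hac : ∀ z ∈ A, z ∈ C → a z = c z)
    (hbc : ∀ z ∈ B, z ∈ C → b z = c z) :
    ∃ F : Z → Y, Continuous F ∧ (∀ z ∈ A, F z = a z) ∧ (∀ z ∈ B, F z = b z) ∧
      ∀ z ∈ C, F z = c z := by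
  let F : Z → Y := fun z => if z ∈ A then a z else if z ∈ B then b z else c z
  have hFa : ∀ z ∈ A, F z = a z := fun z hz => if_pos hz
  have hFb : ∀ z ∈ B, F z = b z := fun z hz => by
    by_cases hzA : z ∈ A
    · rw [hFa z hzA, hab z hzA hz]
    · simp [F, hzA, hz]
  have hFc : ∀ z ∈ C, F z = c z := fun z hz => by
    by_cases hzA : z ∈ A
    · rw [hFa z hzA, hac z hzA hz]
    · by_cases hzB : z ∈ B
      · rw [hFb z hzB, hbc z hzB hz]
      · simp [F, hzA, hzB]
  refine ⟨F, ?_, hFa, hFb, hFc⟩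
  have h := ((ha.congr hFa).union_of_isClosed ((hb.congr hFb).union_of_isClosed
    (hc.congr hFc) hB hC) hA (hB.union hC))
  rw [← continuousOn_univ]
  exact h.mono fun z _ => hcov z

/-- Attaching a vertex `v` along a compactly null link keeps a complex compactly null.  For a map
`f` on a compact space, a null-homotopy of its projection to the link (where the `v`-coordinate
is at most `1/2`) is played at height proportional to the `v`-coordinate, which pushes `f` off
the star of `v`. -/
lemma compactlyNull_insert {K : SimpComplex V} (hflag : K.IsFlag) {S : Set V} {v : V}
    (hvK : ({v} : Finset V) ∈ K.faces) (hvS : v ∉ S) (hS : (K.fullSub S).CompactlyNull)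
    (hL : (K.fullSub (S ∩ K.linkSet v)).CompactlyNull) :
    (K.fullSub (insert v S)).CompactlyNull := by
  intro Z _ _ f
  let t : Z → ℝ := fun z => (f z : V → ℝ) v
  have hfc : ∀ w, Continuous fun z => (f z : V → ℝ) w := fun w =>
    (continuous_apply w).comp (continuous_subtype_val.comp f.continuous)
  have ht : Continuous t := hfc v
  have ht0 : ∀ z, 0 ≤ t z := fun z => (f z).2.1 v
  have hcar : ∀ z, ∃ s ∈ K.faces, (∀ w ∈ s, w ∈ insert v S) ∧ (f z : V → ℝ) ∈ simplex s ∧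
      ∀ w ∈ s, 0 < (f z : V → ℝ) w := by
    intro z
    obtain ⟨s, hs, hz⟩ := mem_realization.1 (f z).2
    obtain ⟨s', hs', hz', hpos⟩ := exists_carrier hz
    exact ⟨s', K.down_closed hs.1 hs' (simplex_nonempty_of_mem hz'),
      fun w hw => hs.2 w (hs' hw), hz', hpos⟩
  choose κ hκK hκS hκ hκpos using hcar
  have hvκ : ∀ z, 0 < t z → v ∈ κ z := fun z hz => by
    by_contra h
    exact hz.ne' ((hκ z).2.1 v h)
  have hδ : (Pi.single v 1 : V → ℝ) ∈ simplex {v} := single_mem_simplex (Finset.mem_singleton_self v)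
  have hvface : ({v} : Finset V) ∈ (K.fullSub (insert v S)).faces :=
    ⟨hvK, fun w hw => by rw [Finset.mem_singleton.1 hw]; exact Set.mem_insert _ _⟩
  have hins : ∀ s ∈ (K.fullSub (S ∩ K.linkSet v)).faces,
      insert v s ∈ (K.fullSub (insert v S)).faces := by
    intro s hs
    refine ⟨hflag.insert_face hs.1 hvK fun w hw => Or.inr (hs.2 w hw).2.2, fun w hw => ?_⟩
    rcases Finset.mem_insert.1 hw with rfl | hw
    · exact Set.mem_insert _ _
    · exact Set.mem_insert_of_mem _ (hs.2 w hw).1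
  let A : Set Z := {z | t z = 0}
  let B : Set Z := {z | t z ≤ 1 / 2 ∧ ∀ w, w ∉ S ∩ K.linkSet v → w ≠ v → (f z : V → ℝ) w = 0}
  let C : Set Z := {z | 1 / 2 ≤ t z}
  have hA : IsClosed A := isClosed_eq ht continuous_const
  have hC : IsClosed C := isClosed_le continuous_const ht
  have hB : IsClosed B := by
    have hBeq : B = {z | t z ≤ 1 / 2} ∩ ⋂ w, ⋂ (_ : w ∉ S ∩ K.linkSet v), ⋂ (_ : w ≠ v),
        {z | (f z : V → ℝ) w = 0} := by
      ext z
      simp only [Set.mem_inter_iff, Set.mem_iInter]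
      rfl
    rw [hBeq]
    refine (isClosed_le ht continuous_const).inter ?_
    exact isClosed_iInter fun w => isClosed_iInter fun _ => isClosed_iInter fun _ =>
      isClosed_eq (hfc w) continuous_const
  have hcov : ∀ z, z ∈ A ∨ z ∈ B ∨ z ∈ C := by
    intro z
    by_cases h0 : t z = 0
    · exact Or.inl h0
    by_cases h1 : 1 / 2 ≤ t z
    · exact Or.inr (Or.inr h1)
    refine Or.inr (Or.inl ⟨by linarith, fun w hw hwv => ?_⟩)
    by_contra hne
    have hwκ : w ∈ κ z := by
      by_contra h
      exact hne ((hκ z).2.1 w h)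
    have hv' := hvκ z (lt_of_le_of_ne (ht0 z) (Ne.symm h0))
    refine hw ⟨(hκS z w hwκ).resolve_left hwv, hwv, K.down_closed (hκK z) ?_ ⟨v, by simp⟩⟩
    intro x hx
    rcases Finset.mem_insert.1 hx with rfl | hx
    · exact hv'
    · rwa [Finset.mem_singleton.1 hx]
  have htB : ∀ z ∈ B, t z < 1 := fun z hz => by linarith [hz.1]
  have hdrop : ∀ z ∈ B, (κ z).erase v ∈ (K.fullSub (S ∩ K.linkSet v)).faces ∧
      dropVertex v (f z) ∈ simplex ((κ z).erase v) := by
    intro z hz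
    have hd := dropVertex_mem (hκ z) (htB z hz)
    refine ⟨⟨K.down_closed (hκK z) (Finset.erase_subset _ _) (simplex_nonempty_of_mem hd), ?_⟩, hd⟩
    intro w hw
    by_contra h
    exact (hκpos z w (Finset.mem_of_mem_erase hw)).ne' (hz.2 w h (Finset.ne_of_mem_erase hw))
  have hdropc : ContinuousOn (fun z => dropVertex v (f z)) B := by
    refine continuousOn_pi.2 fun w => ?_
    unfold dropVertex
    split_ifs
    · exact continuousOn_const
    · exact (hfc w).continuousOn.div (continuous_const.sub (hfc v)).continuousOn
        fun z hz => (sub_pos.2 (htB z hz)).ne'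
  obtain ⟨c, hc, η, hηcont, hηB⟩ := hL.exists_family hB.isCompact hdropc
    fun z hz => mem_realization.2 ⟨_, hdrop z hz⟩
  have hη0 : ∀ z ∈ B, η z 0 = dropVertex v (f z) := fun z hz => (hηB z hz).1
  have hη1 : ∀ z ∈ B, η z 1 = c := fun z hz => (hηB z hz).2.1
  have hηmem : ∀ z ∈ B, ∀ u, ∃ s ∈ (K.fullSub (S ∩ K.linkSet v)).faces, η z u ∈ simplex s :=
    fun z hz u => mem_realization.1 ((hηB z hz).2.2 u)
  obtain ⟨sc, hsc, hcsc⟩ := mem_realization.1 hc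
  -- `G` moves the link coordinate, keeping the height `min 1 (2 t)`
  obtain ⟨G, hG, hGA, hGB, hGC⟩ := exists_glue
    (hA.preimage (continuous_fst (X := Z) (Y := I))) (hB.preimage (continuous_fst (Y := I)))
    (hC.preimage (continuous_fst (Y := I)))
    (fun p => hcov p.1)
    (a := fun p => (f p.1 : V → ℝ))
    (b := fun p => (1 - 2 * t p.1) • η p.1 (2 * t p.1 * p.2) +
      (2 * t p.1) • (Pi.single v 1 : V → ℝ))
    (c := fun _ => Pi.single v 1) (by fun_prop)
    (by
      have : ContinuousOn (fun p : Z × I => η p.1 (2 * t p.1 * p.2)) (Prod.fst ⁻¹' B) :=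
        hηcont.comp (f := fun p : Z × I => (p.1, 2 * t p.1 * (p.2 : ℝ)))
          (by fun_prop) (fun p hp => hp)
      exact ((by fun_prop : Continuous fun p : Z × I => 1 - 2 * t p.1).continuousOn.smul this).add
        (by fun_prop : Continuous fun p : Z × I =>
          (2 * t p.1) • (Pi.single v 1 : V → ℝ)).continuousOn) continuousOn_const
    (by
      intro p hpA hpB
      have h0 : t p.1 = 0 := hpA
      simp only [h0, mul_zero, zero_mul, sub_zero, one_smul, zero_smul, add_zero]
      rw [hη0 _ hpB, dropVertex_of_eq_zero (v := v) h0])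
    (by
      intro p hpA hpC
      have h0 : t p.1 = 0 := hpA
      have h1 : 1 / 2 ≤ t p.1 := hpC
      linarith)
    (by
      intro p hpB hpC
      have h1 : t p.1 = 1 / 2 := le_antisymm hpB.1 hpC
      simp [h1])
  -- `F` is the end result, in which the height has been lowered to `0`
  obtain ⟨F, hF, hFA, hFB, hFC⟩ := exists_glue hA hB hC hcov
    (a := fun z => (f z : V → ℝ)) (b := fun z => η z (2 * t z)) (c := fun _ => c)
    (by fun_prop)
    (hηcont.comp (f := fun z => (z, 2 * t z)) (by fun_prop) (fun z hz => hz)) continuousOn_const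
    (by
      intro z hzA hzB
      have h0 : t z = 0 := hzA
      simp only [h0, mul_zero]
      rw [hη0 _ hzB, dropVertex_of_eq_zero (v := v) h0])
    (by
      intro z hzA hzC
      have h0 : t z = 0 := hzA
      have h1 : 1 / 2 ≤ t z := hzC
      linarith)
    (by
      intro z hzB hzC
      have h1 : t z = 1 / 2 := le_antisymm hzB.1 hzC
      simp only [h1]
      rw [show (2 : ℝ) * (1 / 2) = 1 by norm_num, hη1 z hzB])
  have hcone : ∀ z ∈ B, ∀ y s, y ∈ simplex s → (1 - 2 * t z) • y +
      (2 * t z) • (Pi.single v 1 : V → ℝ) ∈ simplex (insert v s) := fun z hz y s hy =>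
    convex_simplex _ (simplex_mono (Finset.subset_insert v s) hy)
      (single_mem_simplex (Finset.mem_insert_self v s)) (by linarith [hz.1])
      (by linarith [ht0 z]) (by ring)
  have hGmem : ∀ p, G p ∈ (K.fullSub (insert v S)).realization := by
    intro p
    rcases hcov p.1 with hp | hp | hp
    · rw [hGA p hp]
      exact (f p.1).2
    · rw [hGB p hp]
      obtain ⟨s, hs, hy⟩ := hηmem p.1 hp (2 * t p.1 * p.2)
      exact mem_realization.2 ⟨_, hins s hs, hcone p.1 hp _ s hy⟩
    · rw [hGC p hp]
      exact mem_realization.2 ⟨_, hvface, hδ⟩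
  have hFmem : ∀ z, F z ∈ (K.fullSub S).realization := by
    intro z
    rcases hcov z with hz | hz | hz
    · rw [hFA z hz]
      refine mem_realization.2 ⟨κ z, ⟨hκK z, fun w hw => (hκS z w hw).resolve_left ?_⟩, hκ z⟩
      rintro rfl
      exact (hκpos z _ hw).ne' hz
    · rw [hFB z hz]
      obtain ⟨s, hs, hy⟩ := hηmem z hz (2 * t z)
      exact mem_realization.2 ⟨s, ⟨hs.1, fun w hw => (hs.2 w hw).1⟩, hy⟩
    · rw [hFC z hz]
      exact mem_realization.2 ⟨sc, ⟨hsc.1, fun w hw => (hsc.2 w hw).1⟩, hcsc⟩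
  let G0 : C(Z, (K.fullSub (insert v S)).realization) := ⟨fun z => ⟨G (z, 0), hGmem _⟩, by fun_prop⟩
  let G1 : C(Z, (K.fullSub (insert v S)).realization) := ⟨fun z => ⟨G (z, 1), hGmem _⟩, by fun_prop⟩
  let F' : C(Z, (K.fullSub S).realization) := ⟨fun z => ⟨F z, hFmem z⟩, by fun_prop⟩
  have hsub : (K.fullSub S).faces ⊆ (K.fullSub (insert v S)).faces :=
    fun s hs => ⟨hs.1, fun w hw => Set.mem_insert_of_mem _ (hs.2 w hw)⟩
  have e1 : f.Homotopic G0 := by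
    refine homotopic_of_common_simplex _ _ fun z => ⟨κ z, ⟨hκK z, hκS z⟩, hκ z, ?_⟩
    change G (z, 0) ∈ simplex (κ z)
    by_cases hzA : z ∈ A
    · rw [hGA (z, 0) hzA]
      exact hκ z
    · have hv := hvκ z (lt_of_le_of_ne (ht0 z) (Ne.symm hzA))
      rcases (hcov z).resolve_left hzA with hz | hz
      · rw [hGB (z, 0) hz]
        simp only [Set.Icc.coe_zero, mul_zero]
        rw [hη0 z hz]
        have := hcone z hz _ _ (hdrop z hz).2
        rwa [Finset.insert_erase hv] at this
      · rw [hGC (z, 0) hz]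
        exact single_mem_simplex hv
  have e2 : G0.Homotopic G1 :=
    ⟨⟨⟨fun p => ⟨G (p.2, p.1), hGmem _⟩, by fun_prop⟩, fun z => rfl, fun z => rfl⟩⟩
  have e3 : G1.Homotopic ((inclMap hsub).comp F') := by
    refine homotopic_of_common_simplex _ _ fun z => ?_
    change ∃ s ∈ _, G (z, 1) ∈ simplex s ∧ F z ∈ simplex s
    rcases hcov z with hz | hz | hz
    · rw [hGA (z, 1) hz, hFA z hz]
      exact ⟨κ z, ⟨hκK z, hκS z⟩, hκ z, hκ z⟩
    · rw [hGB (z, 1) hz, hFB z hz]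
      obtain ⟨s, hs, hy⟩ := hηmem z hz (2 * t z)
      refine ⟨_, hins s hs, ?_, simplex_mono (Finset.subset_insert v s) hy⟩
      simp only [Set.Icc.coe_one, mul_one]
      exact hcone z hz _ s hy
    · rw [hGC (z, 1) hz, hFC z hz]
      exact ⟨_, hins sc hsc, single_mem_simplex (Finset.mem_insert_self v sc),
        simplex_mono (Finset.subset_insert v sc) hcsc⟩
  obtain ⟨y, hy⟩ := (hS Z F').comp_right (inclMap hsub)
  exact ⟨y, ((e1.trans e2).trans e3).trans hy⟩

/-! ### Contracting descending links by the blocking function -/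

/-- The affine extension of a vertex map `φ`, on points supported in the finite set `F`. -/
def simpMap (φ : V → V) (F : Finset V) (x : V → ℝ) : V → ℝ :=
  ∑ u ∈ F, x u • (Pi.single (φ u) 1 : V → ℝ)

lemma simpMap_mem {φ : V → V} {F s t : Finset V} (hsF : s ⊆ F) {x : V → ℝ} (hx : x ∈ simplex s)
    (h : ∀ u ∈ s, φ u ∈ t) : simpMap φ F x ∈ simplex t := by
  have : simpMap φ F x = ∑ u ∈ s, x u • (Pi.single (φ u) 1 : V → ℝ) := by
    refine (Finset.sum_subset hsF fun u _ hu => ?_).symm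
    rw [hx.2.1 u hu, zero_smul]
  rw [this]
  exact (convex_simplex t).sum_mem (fun u _ => hx.1 u) hx.2.2 fun u hu =>
    single_mem_simplex (h u hu)

lemma IsFlag.link_face {K : SimpComplex V} (hflag : K.IsFlag) {S : Set V} {v : V} {t : Finset V}
    (hne : t.Nonempty) (ht : ∀ u ∈ t, u ∈ S ∩ K.linkSet v)
    (hadj : ∀ u ∈ t, ∀ w ∈ t, K.Adjacent u w) : t ∈ (K.fullSub (S ∩ K.linkSet v)).faces :=
  ⟨hflag.face_of_adjacent hne (fun u hu => vertex_mem (ht u hu).2.2 (by simp)) hadj, ht⟩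

/-- Let `S` contain all vertices of lower remoteness than `v` and none of higher remoteness.
A simplicial map from a finite complex to the part of the link of `v` in `S` is null-homotopic:
as long as its image is blocked, one vertex of the image is replaced by a less remote one,
which is a contiguous change and lowers the blocking number; an unblocked image lies in the star
of a single vertex.  The vertex `v` is kept in the multiset, so that replaced vertices stay
adjacent to `v`. -/
lemma nullhomotopic_link_map {K : SimpComplex V} (hflag : K.IsFlag) {r : V → ℕ}
    {b : Multiset V → V → ℕ} (hb : K.IsBlocking r b) {S : Set V} {v : V}
    (hvK : ({v} : Finset V) ∈ K.faces) (hrv : 0 < r v)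
    (hlow : ∀ w, ({w} : Finset V) ∈ K.faces → r w < r v → w ∈ S) (hhigh : ∀ w ∈ S, r w ≤ r v)
    (F : Finset V) (L' : SimpComplex V) (hL'K : L'.faces ⊆ K.faces)
    (hL'F : ∀ s ∈ L'.faces, s ⊆ F) (φ : V → V)
    (hφ : ∀ u ∈ F, φ u ∈ S ∩ K.linkSet v)
    (hφadj : ∀ u ∈ F, ∀ w ∈ F, K.Adjacent u w → K.Adjacent (φ u) (φ w))
    (g : C(L'.realization, (K.fullSub (S ∩ K.linkSet v)).realization))
    (hg : ∀ x, (g x : V → ℝ) = simpMap φ F x) : g.Nullhomotopic := by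
  induction hN : b (v ::ₘ F.val.map φ) v using Nat.strong_induction_on generalizing φ g with
  | _ N ih =>
  have hmemF : ∀ {s}, s ∈ L'.faces → ∀ {u}, u ∈ s → u ∈ F := fun hs _ hu => hL'F _ hs hu
  have himg : ∀ s ∈ L'.faces, s.image φ ∈ (K.fullSub (S ∩ K.linkSet v)).faces := by
    intro s hs
    have hne : s.Nonempty := by
      rw [Finset.nonempty_iff_ne_empty]
      rintro rfl
      exact L'.not_empty_mem hs
    refine hflag.link_face (hne.image φ) ?_ ?_
    · intro u hu
      obtain ⟨a, ha, rfl⟩ := Finset.mem_image.1 hu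
      exact hφ a (hmemF hs ha)
    · intro u hu w hw
      obtain ⟨a, ha, rfl⟩ := Finset.mem_image.1 hu
      obtain ⟨c, hc, rfl⟩ := Finset.mem_image.1 hw
      exact hφadj a (hmemF hs ha) c (hmemF hs hc) (adjacent_of_mem_face (hL'K hs) ha hc)
  have finish : ∀ w, w ≠ v → ({v, w} : Finset V) ∈ K.faces → r w < r v →
      (∀ u ∈ F, K.Adjacent w (φ u)) → g.Nullhomotopic := by
    intro w hwv hvw hrw hadj
    have hwK : ({w} : Finset V) ∈ K.faces := vertex_mem hvw (by simp)
    have hwL : w ∈ S ∩ K.linkSet v := ⟨hlow w hwK hrw, hwv, hvw⟩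
    have hwf : ({w} : Finset V) ∈ (K.fullSub (S ∩ K.linkSet v)).faces :=
      ⟨hwK, fun u hu => by rwa [Finset.mem_singleton.1 hu]⟩
    refine ⟨⟨Pi.single w 1, mem_realization.2
      ⟨{w}, hwf, single_mem_simplex (Finset.mem_singleton_self w)⟩⟩,
      homotopic_of_common_simplex _ _ fun x => ?_⟩
    obtain ⟨s, hs, hx⟩ := mem_realization.1 x.2
    refine ⟨insert w (s.image φ), ⟨hflag.insert_face (himg s hs).1 hwK ?_, ?_⟩, ?_,
      single_mem_simplex (Finset.mem_insert_self _ _)⟩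
    · intro u hu
      obtain ⟨a, ha, rfl⟩ := Finset.mem_image.1 hu
      exact hadj a (hmemF hs ha)
    · intro u hu
      rcases Finset.mem_insert.1 hu with rfl | hu
      · exact hwL
      · exact (himg s hs).2 u hu
    · rw [hg]
      exact simpMap_mem (hL'F s hs) hx fun u hu =>
        Finset.mem_insert_of_mem (Finset.mem_image_of_mem φ hu)
  have hXF : ∀ u ∈ F, φ u ∈ v ::ₘ F.val.map φ := fun u hu =>
    Multiset.mem_cons_of_mem (Multiset.mem_map_of_mem φ hu)
  have hpair : K.AdjPair (v ::ₘ F.val.map φ) v := by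
    refine ⟨hvK, fun x hx => ?_⟩
    rcases Multiset.mem_cons.1 hx with rfl | hx
    · exact Or.inl rfl
    · obtain ⟨u, hu, rfl⟩ := Multiset.mem_map.1 hx
      exact Or.inr (hφ u hu).2.2
  obtain ⟨hb0, hb1⟩ := hb _ v hpair hrv
  rcases Nat.eq_zero_or_pos (b (v ::ₘ F.val.map φ) v) with hzero | hpos
  · obtain ⟨w, hwv, hvw, hrw, hw⟩ := hb0 hzero
    exact finish w hwv hvw hrw fun u hu => hw.2 _ (hXF u hu)
  obtain ⟨v', hv', w', hwv', hvw', hrw', hadj, hblt⟩ := hb1 hpos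
  by_cases hv'v : v' = v
  · subst hv'v
    exact finish w' hwv' hvw' hrw' fun u hu => hadj _ (hXF u hu) (hpair.2 _ (hXF u hu))
  obtain ⟨u₀, hu₀, rfl⟩ : ∃ u₀ ∈ F, φ u₀ = v' := by
    rcases Multiset.mem_cons.1 hv' with h | h
    · exact absurd h hv'v
    · obtain ⟨u, hu, h⟩ := Multiset.mem_map.1 h
      exact ⟨u, hu, h⟩
  have hw'K : ({w'} : Finset V) ∈ K.faces := vertex_mem hvw' (by simp)
  have hrw'v : r w' < r v := hrw'.trans_le (hhigh _ (hφ u₀ hu₀).1)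
  have hw'v : w' ≠ v := by
    rintro rfl
    exact lt_irrefl _ hrw'v
  have hw'L : w' ∈ S ∩ K.linkSet v := by
    refine ⟨hlow w' hw'K hrw'v, hw'v, ?_⟩
    have h := hadj v (Multiset.mem_cons_self v _) (hpair.2 _ (hXF u₀ hu₀)).symm
    exact h.symm.resolve_left (Ne.symm hw'v)
  let ψ : V → V := Function.update φ u₀ w'
  have hψ0 : ψ u₀ = w' := Function.update_self ..
  have hψ1 : ∀ u, u ≠ u₀ → ψ u = φ u := fun u hu => Function.update_of_ne hu ..
  have hψ : ∀ u ∈ F, ψ u ∈ S ∩ K.linkSet v := by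
    intro u hu
    by_cases h : u = u₀
    · rw [h, hψ0]
      exact hw'L
    · rw [hψ1 u h]
      exact hφ u hu
  have hmix : ∀ u ∈ F, ∀ w ∈ F, K.Adjacent u w → K.Adjacent (ψ u) (φ w) := by
    intro u hu w hw huw
    by_cases h : u = u₀
    · subst h
      rw [hψ0]
      exact hadj _ (hXF w hw) (hφadj u hu w hw huw)
    · rw [hψ1 u h]
      exact hφadj u hu w hw huw
  have hψadj : ∀ u ∈ F, ∀ w ∈ F, K.Adjacent u w → K.Adjacent (ψ u) (ψ w) := by
    intro u hu w hw huw
    by_cases h : w = u₀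
    · by_cases h' : u = u₀
      · rw [h, h']
        exact Or.inl rfl
      · rw [hψ1 u h']
        exact (hmix w hw u hu huw.symm).symm
    · rw [hψ1 w h]
      exact hmix u hu w hw huw
  have hcont : ∀ s ∈ L'.faces, s.image φ ∪ s.image ψ ∈ (K.fullSub (S ∩ K.linkSet v)).faces := by
    intro s hs
    have hcase : ∀ u ∈ s.image φ ∪ s.image ψ, ∃ a ∈ s, u = φ a ∨ u = ψ a := by
      intro u hu
      rcases Finset.mem_union.1 hu with hu | hu <;> obtain ⟨a, ha, rfl⟩ := Finset.mem_image.1 hu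
      · exact ⟨a, ha, Or.inl rfl⟩
      · exact ⟨a, ha, Or.inr rfl⟩
    obtain ⟨y, hy⟩ : (s.image φ).Nonempty := by
      rw [Finset.nonempty_iff_ne_empty]
      intro h
      exact SimpComplex.not_empty_mem _ (h ▸ himg s hs)
    refine hflag.link_face ⟨y, Finset.mem_union_left _ hy⟩ ?_ ?_
    · intro u hu
      obtain ⟨a, ha, rfl | rfl⟩ := hcase u hu
      · exact hφ a (hmemF hs ha)
      · exact hψ a (hmemF hs ha)
    · intro u hu w hw
      obtain ⟨a, ha, hua⟩ := hcase u hu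
      obtain ⟨c, hc, hwc⟩ := hcase w hw
      have hac := adjacent_of_mem_face (hL'K hs) ha hc
      have haF := hmemF hs ha
      have hcF := hmemF hs hc
      rcases hua with rfl | rfl <;> rcases hwc with rfl | rfl
      · exact hφadj a haF c hcF hac
      · exact (hmix c hcF a haF hac.symm).symm
      · exact hmix a haF c hcF hac
      · exact hψadj a haF c hcF hac
  let g' : C(L'.realization, (K.fullSub (S ∩ K.linkSet v)).realization) :=
    ⟨fun x => ⟨simpMap ψ F x, by
      obtain ⟨s, hs, hx⟩ := mem_realization.1 x.2
      exact mem_realization.2 ⟨_, hcont s hs, simpMap_mem (hL'F s hs) hx fun u hu =>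
        Finset.mem_union_right _ (Finset.mem_image_of_mem ψ hu)⟩⟩, by
      refine Continuous.subtype_mk ?_ _
      unfold simpMap
      refine continuous_finsetSum _ fun u _ => Continuous.fun_smul ?_ continuous_const
      exact (continuous_apply u).comp continuous_subtype_val⟩
  have hgg' : g.Homotopic g' := by
    refine homotopic_of_common_simplex _ _ fun x => ?_
    obtain ⟨s, hs, hx⟩ := mem_realization.1 x.2
    refine ⟨_, hcont s hs, ?_, simpMap_mem (hL'F s hs) hx fun u hu =>
        Finset.mem_union_right _ (Finset.mem_image_of_mem ψ hu)⟩
    rw [hg]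
    exact simpMap_mem (hL'F s hs) hx fun u hu =>
        Finset.mem_union_left _ (Finset.mem_image_of_mem φ hu)
  have hX : w' ::ₘ (v ::ₘ F.val.map φ).erase (φ u₀) = v ::ₘ F.val.map ψ := by
    have hF : F.val = u₀ ::ₘ (F.erase u₀).val := by
      rw [Finset.erase_val, Multiset.cons_erase hu₀]
    have hmap : (F.erase u₀).val.map ψ = (F.erase u₀).val.map φ :=
      Multiset.map_congr rfl fun u hu => hψ1 u (Finset.ne_of_mem_erase hu)
    rw [hF, Multiset.map_cons, Multiset.map_cons, hmap, hψ0, Multiset.cons_swap v (φ u₀),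
      Multiset.erase_cons_head, Multiset.cons_swap]
  rw [hX, hN] at hblt
  obtain ⟨y, hy⟩ := ih _ hblt ψ hψ hψadj g' (fun _ => rfl) rfl
  exact ⟨y, hgg'.trans hy⟩

/-- The part of the link of `v` in `S` is compactly null: `nullhomotopic_link_map` applied to the
inclusions of its finite full subcomplexes. -/
lemma compactlyNull_link {K : SimpComplex V} (hflag : K.IsFlag) {r : V → ℕ}
    {b : Multiset V → V → ℕ} (hb : K.IsBlocking r b) {S : Set V} {v : V}
    (hvK : ({v} : Finset V) ∈ K.faces) (hrv : 0 < r v)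
    (hlow : ∀ w, ({w} : Finset V) ∈ K.faces → r w < r v → w ∈ S)
    (hhigh : ∀ w ∈ S, r w ≤ r v) : (K.fullSub (S ∩ K.linkSet v)).CompactlyNull := by
  refine compactlyNull_of_finite _ fun F => ?_
  let L := K.fullSub (S ∩ K.linkSet v)
  let F' := F.filter fun u => u ∈ S ∩ K.linkSet v
  have hF' : ∀ s ∈ (L.fullSub (F : Set V)).faces, s ⊆ F' := fun s hs u hu =>
    Finset.mem_filter.2 ⟨hs.2 u hu, hs.1.2 u hu⟩
  refine nullhomotopic_link_map hflag hb hvK hrv hlow hhigh F' (L.fullSub (F : Set V))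
    (fun s hs => hs.1.1) hF' id (fun u hu => (Finset.mem_filter.1 hu).2)
    (fun _ _ _ _ h => h) _ fun x => ?_
  obtain ⟨s, hs, hx⟩ := mem_realization.1 x.2
  funext w
  change (x : V → ℝ) w = _
  simp only [simpMap, id, Finset.sum_apply, Pi.smul_apply, smul_eq_mul, Pi.single_apply, mul_ite,
    mul_one, mul_zero, Finset.sum_ite_eq]
  split_ifs with h
  · rfl
  · exact hx.2.1 w fun hw => h (hF' s hs hw)

/-! ### Induction on remoteness -/

lemma compactSpace_fullSub (K : SimpComplex V) (F : Finset V) :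
    CompactSpace (K.fullSub (F : Set V)).realization := by
  rw [← isCompact_iff_compactSpace]
  have : (K.fullSub (F : Set V)).realization =
      ⋃ s ∈ F.powerset.filter (· ∈ K.faces), simplex s := by
    ext x
    simp only [mem_realization, Set.mem_iUnion, Finset.mem_filter, Finset.mem_powerset, exists_prop]
    exact ⟨fun ⟨s, hs, hx⟩ => ⟨s, ⟨hs.2, hs.1⟩, hx⟩, fun ⟨s, hs, hx⟩ => ⟨s, ⟨hs.2, hs.1⟩, hx⟩⟩
  rw [this]
  exact Finset.isCompact_biUnion _ fun s _ => isCompact_simplex s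

/-- If every finite part of `K` lies in a compactly null subcomplex of `K`, then `K` is
compactly null. -/
lemma compactlyNull_of_directed (K : SimpComplex V)
    (h : ∀ F : Finset V, ∃ M : SimpComplex V, M.CompactlyNull ∧ M.faces ⊆ K.faces ∧
      (K.fullSub (F : Set V)).faces ⊆ M.faces) : K.CompactlyNull := by
  refine compactlyNull_of_finite K fun F => ?_
  obtain ⟨M, hM, hMK, hFM⟩ := h F
  have := compactSpace_fullSub K F
  exact (hM _ (inclMap hFM)).comp_right (inclMap hMK)

/-- Finitely many vertices of remoteness `0` lie in the star of some vertex of remoteness `0`: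
no vertex of remoteness `0` can be replaced, so a common neighbour `w` of
them can be made less remote until its remoteness is `0`. -/
lemma exists_center {K : SimpComplex V} {r : V → ℕ} {b : Multiset V → V → ℕ}
    (hb : K.IsBlocking r b) (F : Finset V) (hF : ∀ u ∈ F, r u = 0) (w : V)
    (hw : K.AdjPair F.val w) : ∃ c, r c = 0 ∧ K.AdjPair F.val c := by
  induction hN : r w using Nat.strong_induction_on generalizing w with
  | _ N ih =>
  rcases Nat.eq_zero_or_pos (r w) with h0 | hpos
  · exact ⟨w, h0, hw⟩
  obtain ⟨hb0, hb1⟩ := hb _ w hw hpos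
  rcases Nat.eq_zero_or_pos (b F.val w) with hz | hp
  · obtain ⟨w', _, _, hlt, hw'⟩ := hb0 hz
    exact ih (r w') (hN ▸ hlt) w' hw' rfl
  · obtain ⟨v', hv', w', _, _, hlt, _⟩ := hb1 hp
    rw [hF v' hv'] at hlt
    exact absurd hlt (Nat.not_lt_zero _)

/-- The part of remoteness `0` is compactly null because each finite subcomplex of it can be coned
off within it. -/
lemma compactlyNull_zero {K : SimpComplex V} (hflag : K.IsFlag) {v₀ : V}
    (hv₀ : ({v₀} : Finset V) ∈ K.faces) {r : V → ℕ} (hr : K.IsRemoteness v₀ r)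
    {b : Multiset V → V → ℕ} (hb : K.IsBlocking r b) :
    (K.fullSub {v | r v ≤ 0}).CompactlyNull := by
  refine compactlyNull_of_finite _ fun F => ?_
  let F' := F.filter fun u => ({u} : Finset V) ∈ K.faces ∧ r u = 0
  obtain ⟨c, hc0, hcK, hc⟩ := exists_center hb F' (fun u hu => (Finset.mem_filter.1 hu).2.2) v₀
    ⟨hv₀, fun u hu => hr u (Finset.mem_filter.1 hu).2.1 (Finset.mem_filter.1 hu).2.2⟩
  have hcf : ({c} : Finset V) ∈ (K.fullSub {v | r v ≤ 0}).faces :=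
    ⟨hcK, fun u hu => by rw [Finset.mem_singleton.1 hu]; exact hc0.le⟩
  refine ⟨⟨Pi.single c 1, mem_realization.2
    ⟨{c}, hcf, single_mem_simplex (Finset.mem_singleton_self c)⟩⟩,
    homotopic_of_common_simplex _ _ fun x => ?_⟩
  obtain ⟨s, hs, hx⟩ := mem_realization.1 x.2
  refine ⟨insert c s, ⟨hflag.insert_face hs.1.1 hcK fun u hu => ?_, fun u hu => ?_⟩,
    simplex_mono (Finset.subset_insert c s) hx, single_mem_simplex (Finset.mem_insert_self c s)⟩
  · exact hc u (Finset.mem_filter.2 ⟨hs.2 u hu, vertex_mem hs.1.1 hu,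
      Nat.le_zero.1 (hs.1.2 u hu)⟩)
  · rcases Finset.mem_insert.1 hu with rfl | hu
    · exact hc0.le
    · exact hs.1.2 u hu

/-- The sublevel sets of the remoteness function are compactly null: passing from level `n` to
level `n + 1` amounts, on compact sets, to attaching finitely many vertices one after another. -/
lemma compactlyNull_of_blocking {K : SimpComplex V} (hflag : K.IsFlag) {v₀ : V}
    (hv₀ : ({v₀} : Finset V) ∈ K.faces) {r : V → ℕ} (hr : K.IsRemoteness v₀ r)
    {b : Multiset V → V → ℕ} (hb : K.IsBlocking r b) : K.CompactlyNull := by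
  have hlevel : ∀ n, (K.fullSub {v | r v ≤ n}).CompactlyNull := by
    intro n
    induction n with
    | zero => exact compactlyNull_zero hflag hv₀ hr hb
    | succ n ih =>
      have hfin : ∀ F : Finset V, (∀ v ∈ F, ({v} : Finset V) ∈ K.faces ∧ r v = n + 1) →
          (K.fullSub ({v | r v ≤ n} ∪ (F : Set V))).CompactlyNull := by
        intro F
        induction F using Finset.induction_on with
        | empty =>
          intro _
          simpa using ih
        | insert a F ha ihF =>
          intro hF
          have haF := hF a (Finset.mem_insert_self a F)
          rw [Finset.coe_insert, Set.union_insert]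
          refine compactlyNull_insert hflag haF.1 ?_
            (ihF fun v hv => hF v (Finset.mem_insert_of_mem hv)) ?_
          · rintro (h | h)
            · have : r a ≤ n := h
              omega
            · exact ha h
          · refine compactlyNull_link hflag hb haF.1 (by omega) ?_ ?_
            · intro w _ hw
              left
              change r w ≤ n
              omega
            · rintro w (hw | hw)
              · have : r w ≤ n := hw
                omega
              · rw [(hF w (Finset.mem_insert_of_mem hw)).2, haF.2]
      refine compactlyNull_of_directed _ fun F => ?_
      let F' := F.filter fun v => ({v} : Finset V) ∈ K.faces ∧ r v = n + 1
      refine ⟨_, hfin F' fun v hv => (Finset.mem_filter.1 hv).2, ?_, ?_⟩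
      · rintro s ⟨hs, hsF⟩
        refine ⟨hs, fun v hv => ?_⟩
        rcases hsF v hv with h | h
        · exact Nat.le_succ_of_le h
        · exact (Finset.mem_filter.1 h).2.2.le
      · rintro s ⟨⟨hs, hsn⟩, hsF⟩
        refine ⟨hs, fun v hv => ?_⟩
        have h1 : r v ≤ n + 1 := hsn v hv
        by_cases h : r v ≤ n
        · exact Or.inl h
        · exact Or.inr (Finset.mem_coe.2 (Finset.mem_filter.2
            ⟨hsF v hv, vertex_mem hs hv, by omega⟩))
  refine compactlyNull_of_directed K fun F => ⟨_, hlevel (F.sup r), fun s hs => hs.1, ?_⟩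
  rintro s ⟨hs, hsF⟩
  exact ⟨hs, fun v hv => Finset.le_sup (f := r) (Finset.mem_coe.1 (hsF v hv))⟩

/-! ### Skeleton-wise construction of a contraction -/

/-- The product of a closed simplex with the unit interval. -/
def prism (s : Finset V) : Set ((V → ℝ) × ℝ) := {p | p.1 ∈ simplex s ∧ p.2 ∈ Set.Icc (0 : ℝ) 1}

/-- The boundary of a prism: both ends and the prisms over the proper faces. -/
def prismBoundary (s : Finset V) : Set ((V → ℝ) × ℝ) :=
  {p | p ∈ prism s ∧ (p.2 = 0 ∨ p.2 = 1 ∨ ∃ v ∈ s, p.1 v = 0)}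

lemma isClosed_prism (s : Finset V) : IsClosed (prism s) :=
  (isClosed_simplex s).prod isClosed_Icc

lemma isCompact_prismBoundary (s : Finset V) : IsCompact (prismBoundary s) := by
  have hc : IsCompact (prism s) := (isCompact_simplex s).prod isCompact_Icc
  refine hc.of_isClosed_subset ?_ fun p hp => hp.1
  have : prismBoundary s = prism s ∩ ({p | p.2 = 0} ∪ ({p | p.2 = 1} ∪
      ⋃ v ∈ s, {p : (V → ℝ) × ℝ | p.1 v = 0})) := by
    ext p
    simp only [Set.mem_inter_iff, Set.mem_union, Set.mem_iUnion, exists_prop]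
    rfl
  rw [this]
  refine (isClosed_prism s).inter ((isClosed_eq continuous_snd continuous_const).union
    ((isClosed_eq continuous_snd continuous_const).union
      (isClosed_biUnion_finset fun v _ => isClosed_eq ?_ continuous_const)))
  exact (continuous_apply v).comp continuous_fst

/-- The gauge of the prism about its centre: it is `0` at the centre, `1` on the boundary. -/
def prismGauge (s : Finset V) (hs : s.Nonempty) (p : (V → ℝ) × ℝ) : ℝ :=
  max |2 * p.2 - 1| (s.sup' hs fun v => 1 - s.card * p.1 v)

/-- The radial projection of the prism from its centre to its boundary. -/
def prismProj (s : Finset V) (hs : s.Nonempty) (p : (V → ℝ) × ℝ) : (V → ℝ) × ℝ :=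
  (fun v => (if v ∈ s then (s.card : ℝ)⁻¹ else 0) +
      (prismGauge s hs p)⁻¹ * (p.1 v - if v ∈ s then (s.card : ℝ)⁻¹ else 0),
    1 / 2 + (prismGauge s hs p)⁻¹ * (p.2 - 1 / 2))

lemma continuous_prismGauge (s : Finset V) (hs : s.Nonempty) : Continuous (prismGauge s hs) := by
  unfold prismGauge
  refine Continuous.max (by fun_prop) (Continuous.finset_sup'_apply hs fun v _ => ?_)
  have : Continuous fun p : (V → ℝ) × ℝ => p.1 v := (continuous_apply v).comp continuous_fst
  fun_prop

lemma prismGauge_eq_one {s : Finset V} (hs : s.Nonempty) {p : (V → ℝ) × ℝ}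
    (hp : p ∈ prismBoundary s) : prismGauge s hs p = 1 := by
  obtain ⟨⟨hx, ht⟩, h⟩ := hp
  refine le_antisymm (max_le (abs_le.2 ⟨by linarith [ht.1], by linarith [ht.2]⟩)
    (Finset.sup'_le hs _ fun v _ => ?_)) ?_
  · have := mul_nonneg (Nat.cast_nonneg (α := ℝ) s.card) (hx.1 v)
    linarith
  · rcases h with h | h | ⟨v, hv, h⟩
    · refine le_max_of_le_left ?_
      rw [h]
      norm_num
    · refine le_max_of_le_left ?_
      rw [h]
      norm_num
    · refine le_max_of_le_right ?_
      calc (1 : ℝ) = 1 - (s.card : ℝ) * p.1 v := by rw [h]; ring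
        _ ≤ _ := Finset.le_sup' (fun v => 1 - (s.card : ℝ) * p.1 v) hv

lemma prismProj_mem {s : Finset V} (hs : s.Nonempty) {p : (V → ℝ) × ℝ} (hp : p ∈ prism s)
    (hpos : 0 < prismGauge s hs p) : prismProj s hs p ∈ prismBoundary s := by
  obtain ⟨hx, ht⟩ := hp
  have hm : (0 : ℝ) < s.card := by exact_mod_cast hs.card_pos
  have h1 : |2 * p.2 - 1| ≤ prismGauge s hs p := le_max_left _ _
  have h2 : ∀ v ∈ s, 1 - s.card * p.1 v ≤ prismGauge s hs p := fun v hv =>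
    (Finset.le_sup' (fun v => 1 - (s.card : ℝ) * p.1 v) hv).trans (le_max_right _ _)
  have h3 : prismGauge s hs p = |2 * p.2 - 1| ∨ ∃ v ∈ s, prismGauge s hs p = 1 - s.card * p.1 v := by
    rcases max_choice |2 * p.2 - 1| (s.sup' hs fun v => 1 - (s.card : ℝ) * p.1 v) with h | h
    · exact Or.inl h
    · obtain ⟨v, hv, h'⟩ := Finset.exists_mem_eq_sup' hs fun v => 1 - (s.card : ℝ) * p.1 v
      exact Or.inr ⟨v, hv, h.trans h'⟩
  have hq2 : (prismProj s hs p).2 = 1 / 2 + (prismGauge s hs p)⁻¹ * (p.2 - 1 / 2) := rfl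
  have hq1 : ∀ v ∈ s, (prismProj s hs p).1 v =
      (s.card : ℝ)⁻¹ + (prismGauge s hs p)⁻¹ * (p.1 v - (s.card : ℝ)⁻¹) := fun v hv => by
    simp only [prismProj, if_pos hv]
  have hq1' : ∀ v, v ∉ s → (prismProj s hs p).1 v = 0 := fun v hv => by
    simp only [prismProj, if_neg hv, hx.2.1 v hv]
    ring
  generalize prismGauge s hs p = l at *
  have e1 : ∀ v ∈ s, (prismProj s hs p).1 v = (l - (1 - s.card * p.1 v)) / (s.card * l) :=
    fun v hv => by
      rw [hq1 v hv]
      field_simp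
      ring
  have e2 : (prismProj s hs p).2 = (l + (2 * p.2 - 1)) / (2 * l) := by
    rw [hq2]
    field_simp
  obtain ⟨h1a, h1b⟩ := abs_le.1 h1
  refine ⟨⟨⟨fun v => ?_, hq1', ?_⟩, ?_, ?_⟩, ?_⟩
  · by_cases hv : v ∈ s
    · rw [e1 v hv]
      exact div_nonneg (by linarith [h2 v hv]) (by positivity)
    · rw [hq1' v hv]
  · rw [Finset.sum_congr rfl hq1, Finset.sum_add_distrib, ← Finset.mul_sum,
      Finset.sum_sub_distrib, hx.2.2]
    simp only [Finset.sum_const, nsmul_eq_mul]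
    rw [mul_inv_cancel₀ hm.ne']
    ring
  · rw [e2]
    exact div_nonneg (by linarith) (by positivity)
  · rw [e2, div_le_one (by positivity)]
    linarith
  · rcases h3 with h3 | ⟨v, hv, h3⟩
    · rcases abs_choice (2 * p.2 - 1) with h | h
      · right; left
        rw [e2, ← h, ← h3]
        field_simp
        ring
      · left
        rw [e2, h3, h]
        simp
    · right; right
      refine ⟨v, hv, ?_⟩
      rw [e1 v hv, ← h3]
      simp

lemma prismProj_eq_self {s : Finset V} (hs : s.Nonempty) {p : (V → ℝ) × ℝ}
    (h : prismGauge s hs p = 1) : prismProj s hs p = p := by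
  refine Prod.ext (funext fun v => ?_) ?_
  · simp only [prismProj, h]
    ring
  · simp only [prismProj, h]
    ring

/-- Maps from the boundary of a prism to a compactly null complex extend to the prism: a
null-homotopy is run along the radii in the outer half, the inner half goes to a point. -/
lemma CompactlyNull.exists_extension {K : SimpComplex V} (hK : K.CompactlyNull) {s : Finset V}
    (hs : s.Nonempty) {f : (V → ℝ) × ℝ → V → ℝ} (hf : ContinuousOn f (prismBoundary s))
    (hfK : ∀ p ∈ prismBoundary s, f p ∈ K.realization) :
    ∃ E : (V → ℝ) × ℝ → V → ℝ, ContinuousOn E (prism s) ∧ (∀ p ∈ prism s, E p ∈ K.realization) ∧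
      ∀ p ∈ prismBoundary s, E p = f p := by
  obtain ⟨c, hc, η, hηc, hη⟩ := hK.exists_family (isCompact_prismBoundary s) hf hfK
  have hgc := continuous_prismGauge s hs
  let E : (V → ℝ) × ℝ → V → ℝ := fun p =>
    if prismGauge s hs p ≤ 1 / 2 then c else η (prismProj s hs p) (2 - 2 * prismGauge s hs p)
  have hE1 : ∀ p, prismGauge s hs p ≤ 1 / 2 → E p = c := fun p hp => if_pos hp
  have hE2 : ∀ p ∈ prism s, 1 / 2 ≤ prismGauge s hs p →
      E p = η (prismProj s hs p) (2 - 2 * prismGauge s hs p) := by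
    intro p hp hg
    rcases hg.eq_or_lt with hg' | hg'
    · rw [hE1 p hg'.ge, ← hg', show (2 : ℝ) - 2 * (1 / 2) = 1 by norm_num]
      exact ((hη _ (prismProj_mem hs hp (by linarith))).2.1).symm
    · exact if_neg (not_le.2 hg')
  refine ⟨E, ?_, ?_, ?_⟩
  · have hcl1 : IsClosed (prism s ∩ {p | prismGauge s hs p ≤ 1 / 2}) :=
      (isClosed_prism s).inter (isClosed_le hgc continuous_const)
    have hcl2 : IsClosed (prism s ∩ {p | 1 / 2 ≤ prismGauge s hs p}) :=
      (isClosed_prism s).inter (isClosed_le continuous_const hgc)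
    have hc1 : ContinuousOn E (prism s ∩ {p | prismGauge s hs p ≤ 1 / 2}) :=
      continuousOn_const.congr fun p hp => hE1 p hp.2
    have hc2 : ContinuousOn E (prism s ∩ {p | 1 / 2 ≤ prismGauge s hs p}) := by
      have hpos : ∀ p ∈ prism s ∩ {p | 1 / 2 ≤ prismGauge s hs p}, 0 < prismGauge s hs p :=
        fun p hp => lt_of_lt_of_le (by norm_num) hp.2
      have hinv : ContinuousOn (fun p => (prismGauge s hs p)⁻¹)
          (prism s ∩ {p | 1 / 2 ≤ prismGauge s hs p}) :=
        hgc.continuousOn.inv₀ fun p hp => (hpos p hp).ne'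
      have hproj : ContinuousOn (prismProj s hs)
          (prism s ∩ {p | 1 / 2 ≤ prismGauge s hs p}) := by
        refine ContinuousOn.prodMk (continuousOn_pi.2 fun v => ?_) ?_
        · have hv : Continuous fun p : (V → ℝ) × ℝ => p.1 v :=
            (continuous_apply v).comp continuous_fst
          exact continuousOn_const.add (hinv.mul (hv.sub continuous_const).continuousOn)
        · exact continuousOn_const.add (hinv.mul
            (continuous_snd.sub continuous_const).continuousOn)
      refine (hηc.comp (hproj.prodMk
        (continuous_const.sub (continuous_const.mul hgc)).continuousOn) ?_).congr
        fun p hp => hE2 p hp.1 hp.2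
      exact fun p hp => prismProj_mem hs hp.1 (hpos p hp)
    refine (hc1.union_of_isClosed hc2 hcl1 hcl2).mono fun p hp => ?_
    rcases le_total (prismGauge s hs p) (1 / 2) with h | h
    · exact Or.inl ⟨hp, h⟩
    · exact Or.inr ⟨hp, h⟩
  · intro p hp
    rcases le_total (prismGauge s hs p) (1 / 2) with h | h
    · rw [hE1 p h]
      exact hc
    · rw [hE2 p hp h]
      exact (hη _ (prismProj_mem hs hp (by linarith))).2.2 _
  · intro p hp
    have h1 := prismGauge_eq_one hs hp
    rw [hE2 p hp.1 (by rw [h1]; norm_num), prismProj_eq_self hs h1, h1,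
      show (2 : ℝ) - 2 * 1 = 0 by norm_num]
    exact (hη p hp).1

/-- `H` restricts to a homotopy from the inclusion to the constant map `y` on each prism over a
face with at most `n` vertices. -/
def ContractsUpTo (K : SimpComplex V) (y : V → ℝ) (n : ℕ) (H : (V → ℝ) × ℝ → V → ℝ) : Prop :=
  ∀ s ∈ K.faces, s.card ≤ n → ContinuousOn H (prism s) ∧ ∀ p ∈ prism s,
    H p ∈ K.realization ∧ (p.2 = 0 → H p = p.1) ∧ (p.2 = 1 → H p = y)

lemma prism_erase {s : Finset V} {v : V} {p : (V → ℝ) × ℝ} (hp : p ∈ prism s)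
    (hv : p.1 v = 0) : p ∈ prism (s.erase v) := by
  have h := dropVertex_mem (v := v) hp.1 (by rw [hv]; norm_num)
  rw [dropVertex_of_eq_zero hv] at h
  exact ⟨h, hp.2⟩

/-- A contraction of the skeleton of faces with at most `n` vertices extends to the next skeleton,
one prism at a time; a point is assigned to the prism over its carrier. -/
lemma ContractsUpTo.succ {K : SimpComplex V} (hK : K.CompactlyNull) {y : V → ℝ}
    (hy : y ∈ K.realization) {n : ℕ} {H : (V → ℝ) × ℝ → V → ℝ} (hH : K.ContractsUpTo y n H) :
    ∃ H', K.ContractsUpTo y (n + 1) H' ∧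
      ∀ s ∈ K.faces, s.card ≤ n → ∀ p ∈ prism s, H' p = H p := by
  let f : (V → ℝ) × ℝ → V → ℝ := fun p => if p.2 = 0 then p.1 else if p.2 = 1 then y else H p
  have hf0 : ∀ p, p.2 = 0 → f p = p.1 := fun p hp => if_pos hp
  have hf1 : ∀ p, p.2 = 1 → f p = y := fun p hp => by simp [f, hp]
  have hfH : ∀ s ∈ K.faces, s.card ≤ n → ∀ p ∈ prism s, f p = H p := by
    intro s hs hn p hp
    obtain ⟨_, h⟩ := hH s hs hn
    by_cases h0 : p.2 = 0
    · rw [hf0 p h0, (h p hp).2.1 h0]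
    by_cases h1 : p.2 = 1
    · rw [hf1 p h1, (h p hp).2.2 h1]
    simp [f, h0, h1]
  have herase : ∀ s ∈ K.faces, s.card = n + 1 → ∀ v ∈ s, ∀ p ∈ prism (s.erase v),
      s.erase v ∈ K.faces ∧ (s.erase v).card ≤ n := by
    intro s hs hn v hv p hp
    refine ⟨K.down_closed hs (Finset.erase_subset _ _) (simplex_nonempty_of_mem hp.1), ?_⟩
    rw [Finset.card_erase_of_mem hv, hn]
    simp
  have hext : ∀ s, s ∈ K.faces → s.card = n + 1 → ∃ E : (V → ℝ) × ℝ → V → ℝ,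
      ContinuousOn E (prism s) ∧ (∀ p ∈ prism s, E p ∈ K.realization) ∧
      ∀ p ∈ prismBoundary s, E p = f p := by
    intro s hs hn
    have hne : s.Nonempty := by
      rw [← Finset.card_pos]
      omega
    refine hK.exists_extension hne ?_ ?_
    · have c0 : ContinuousOn f (prism s ∩ {p | p.2 = 0}) :=
        continuous_fst.continuousOn.congr fun p hp => hf0 p hp.2
      have c1 : ContinuousOn f (prism s ∩ {p | p.2 = 1}) :=
        continuousOn_const.congr fun p hp => hf1 p hp.2
      have c2 : ContinuousOn f (⋃ v : s, prism (s.erase (v : V))) := by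
        refine (locallyFinite_of_finite _).continuousOn_iUnion (fun v => isClosed_prism _)
          fun v => ?_
        by_cases he : ∃ p, p ∈ prism (s.erase (v : V))
        · obtain ⟨p, hp⟩ := he
          obtain ⟨hf, hc⟩ := herase s hs hn v v.2 p hp
          exact (hH _ hf hc).1.congr fun q hq => hfH _ hf hc q hq
        · exact fun p hp => absurd ⟨p, hp⟩ he
      have k0 : IsClosed (prism s ∩ {p | p.2 = 0}) :=
        (isClosed_prism s).inter (isClosed_eq continuous_snd continuous_const)
      have k1 : IsClosed (prism s ∩ {p | p.2 = 1}) :=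
        (isClosed_prism s).inter (isClosed_eq continuous_snd continuous_const)
      have k2 : IsClosed (⋃ v : s, prism (s.erase (v : V))) :=
        isClosed_iUnion_of_finite fun v => isClosed_prism _
      refine (c0.union_of_isClosed (c1.union_of_isClosed c2 k1 k2) k0 (k1.union k2)).mono ?_
      rintro p ⟨hp, h | h | ⟨v, hv, h⟩⟩
      · exact Or.inl ⟨hp, h⟩
      · exact Or.inr (Or.inl ⟨hp, h⟩)
      · exact Or.inr (Or.inr (Set.mem_iUnion.2 ⟨⟨v, hv⟩, prism_erase hp h⟩))
    · rintro p ⟨hp, h | h | ⟨v, hv, h⟩⟩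
      · rw [hf0 p h]
        exact mem_realization.2 ⟨s, hs, hp.1⟩
      · rw [hf1 p h]
        exact hy
      · have hp' := prism_erase hp h
        obtain ⟨hf, hc⟩ := herase s hs hn v hv p hp'
        rw [hfH _ hf hc p hp']
        exact ((hH _ hf hc).2 p hp').1
  choose! E hEc hEm hEb using hext
  let P : (V → ℝ) × ℝ → Finset V → Prop := fun p s =>
    s ∈ K.faces ∧ s.card = n + 1 ∧ ∀ v ∈ s, 0 < p.1 v
  let H' : (V → ℝ) × ℝ → V → ℝ := fun p => if h : ∃ s, P p s then E h.choose p else H p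
  have hold : ∀ s ∈ K.faces, s.card ≤ n → ∀ p ∈ prism s, H' p = H p := by
    intro s hs hn p hp
    refine dif_neg ?_
    rintro ⟨t, _, ht, hpos⟩
    have := Finset.card_le_card (carrier_subset hpos hp.1)
    omega
  have hnew : ∀ s ∈ K.faces, s.card = n + 1 → ∀ p ∈ prism s, H' p = E s p := by
    intro s hs hn p hp
    by_cases h : ∃ t, P p t
    · have h1 : H' p = E h.choose p := dif_pos h
      obtain ⟨_, ht, hpos⟩ := h.choose_spec
      rw [h1, Finset.eq_of_subset_of_card_le (carrier_subset hpos hp.1) (by rw [ht, hn])]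
    · have h1 : H' p = H p := dif_neg h
      obtain ⟨v, hv, hv0⟩ : ∃ v ∈ s, p.1 v = 0 := by
        by_contra hcon
        push Not at hcon
        exact h ⟨s, hs, hn, fun v hv => lt_of_le_of_ne (hp.1.1 v) (Ne.symm (hcon v hv))⟩
      have hp' := prism_erase hp hv0
      obtain ⟨hf, hc⟩ := herase s hs hn v hv p hp'
      rw [h1, hEb s hs hn p ⟨hp, Or.inr (Or.inr ⟨v, hv, hv0⟩)⟩, hfH _ hf hc p hp']
  refine ⟨H', ?_, hold⟩
  intro s hs hn
  rcases Nat.lt_or_eq_of_le hn with hn | hn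
  · have hn := Nat.lt_succ_iff.1 hn
    obtain ⟨h1, h2⟩ := hH s hs hn
    refine ⟨h1.congr (hold s hs hn), fun p hp => ?_⟩
    rw [hold s hs hn p hp]
    exact h2 p hp
  · refine ⟨(hEc s hs hn).congr (hnew s hs hn), fun p hp => ?_⟩
    rw [hnew s hs hn p hp]
    refine ⟨hEm s hs hn p hp, fun h => ?_, fun h => ?_⟩
    · rw [hEb s hs hn p ⟨hp, Or.inl h⟩, hf0 p h]
    · rw [hEb s hs hn p ⟨hp, Or.inr (Or.inl h)⟩, hf1 p h]

/-- A contraction of a compactly null complex that is continuous on every prism, that is, for the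
weak topology. -/
lemma CompactlyNull.exists_contraction {K : SimpComplex V} (hK : K.CompactlyNull) {y : V → ℝ}
    (hy : y ∈ K.realization) : ∃ H : (V → ℝ) × ℝ → V → ℝ, ∀ n, K.ContractsUpTo y n H := by
  have hstep : ∀ n (H : {H // K.ContractsUpTo y n H}), ∃ H' : {H // K.ContractsUpTo y (n + 1) H},
      ∀ s ∈ K.faces, s.card ≤ n → ∀ p ∈ prism s, H'.1 p = H.1 p := by
    intro n H
    obtain ⟨H', h1, h2⟩ := H.2.succ hK hy
    exact ⟨⟨H', h1⟩, h2⟩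
  choose next hnext using hstep
  have hzero : K.ContractsUpTo y 0 (fun _ => 0) := by
    intro s hs hn
    rw [Finset.card_eq_zero.1 (Nat.le_zero.1 hn)] at hs
    exact absurd hs K.not_empty_mem
  let Φ : ∀ n, {H // K.ContractsUpTo y n H} := fun n => Nat.rec ⟨_, hzero⟩ next n
  have hΦ : ∀ n, ∀ s ∈ K.faces, s.card ≤ n → ∀ p ∈ prism s, (Φ n).1 p = (Φ s.card).1 p := by
    intro n s hs hn p hp
    induction n, hn using Nat.le_induction with
    | base => rfl
    | succ n hn ih => exact (hnext n (Φ n) s hs hn p hp).trans ih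
  let P : (V → ℝ) × ℝ → Finset V → Prop := fun p s =>
    s ∈ K.faces ∧ p.1 ∈ simplex s ∧ ∀ v ∈ s, 0 < p.1 v
  let H : (V → ℝ) × ℝ → V → ℝ := fun p => if h : ∃ s, P p s then (Φ h.choose.card).1 p else 0
  have hH : ∀ s ∈ K.faces, ∀ p ∈ prism s, H p = (Φ s.card).1 p := by
    intro s hs p hp
    have h : ∃ t, P p t := by
      obtain ⟨t, hts, ht, hpos⟩ := exists_carrier hp.1
      exact ⟨t, K.down_closed hs hts (simplex_nonempty_of_mem ht), ht, hpos⟩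
    have h1 : H p = (Φ h.choose.card).1 p := dif_pos h
    obtain ⟨hf, ht, hpos⟩ := h.choose_spec
    rw [h1]
    exact (hΦ s.card _ hf (Finset.card_le_card (carrier_subset hpos hp.1)) p ⟨ht, hp.2⟩).symm
  refine ⟨H, fun n s hs _ => ?_⟩
  obtain ⟨h1, h2⟩ := (Φ s.card).2 s hs le_rfl
  refine ⟨h1.congr (hH s hs), fun p hp => ?_⟩
  rw [hH s hs p hp]
  exact h2 p hp

/-- A contraction that is continuous on each prism becomes continuous after precomposition with the
localizing map, which is itself homotopic to the identity. -/
lemma CompactlyNull.contractible {K : SimpComplex V} (hK : K.CompactlyNull) {v₀ : V}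
    (hv₀ : ({v₀} : Finset V) ∈ K.faces) : K.Contractible := by
  have hy : (Pi.single v₀ 1 : V → ℝ) ∈ K.realization :=
    mem_realization.2 ⟨{v₀}, hv₀, single_mem_simplex (Finset.mem_singleton_self v₀)⟩
  obtain ⟨H, hH⟩ := hK.exists_contraction hy
  obtain ⟨g, hg, hgl⟩ := exists_localizing K
  refine (contractible_iff_id_nullhomotopic _).2 ⟨⟨_, hy⟩, ?_⟩
  have e1 : (ContinuousMap.id K.realization).Homotopic g :=
    homotopic_of_common_simplex _ _ fun x => by
      obtain ⟨s, hs, hx⟩ := mem_realization.1 x.2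
      exact ⟨s, hs, hx, hg x s hx⟩
  refine e1.trans ?_
  have hprism : ∀ (x : K.realization) (t : I) (s : Finset V), (g x : V → ℝ) ∈ simplex s →
      ((g x : V → ℝ), (t : ℝ)) ∈ prism s := fun x t s hx => ⟨hx, t.2⟩
  have hval : ∀ (x : K.realization) (t : I), H (g x, t) ∈ K.realization ∧
      ((t : ℝ) = 0 → H (g x, t) = g x) ∧ ((t : ℝ) = 1 → H (g x, t) = Pi.single v₀ 1) := by
    intro x t
    obtain ⟨s, hs, hx⟩ := mem_realization.1 (g x).2
    exact (hH s.card s hs le_rfl).2 _ (hprism x t s hx)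
  refine ⟨⟨⟨fun p => ⟨H (g p.2, p.1), (hval p.2 p.1).1⟩, ?_⟩, fun x => ?_, fun x => ?_⟩⟩
  · refine Continuous.subtype_mk (continuous_iff_continuousAt.2 ?_) _
    rintro ⟨t, x⟩
    obtain ⟨s, hs, hx⟩ := hgl x
    have hc : ContinuousOn (fun p : I × K.realization => H (g p.2, p.1))
        {p | (g p.2 : V → ℝ) ∈ simplex s} := by
      have hgc : Continuous fun p : I × K.realization => ((g p.2 : V → ℝ), (p.1 : ℝ)) :=
        (continuous_subtype_val.comp (g.continuous.comp continuous_snd)).prodMk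
          (continuous_subtype_val.comp continuous_fst)
      exact (hH s.card s hs le_rfl).1.comp hgc.continuousOn fun p hp => hprism p.2 p.1 s hp
    exact hc.continuousAt ((continuous_snd.tendsto (t, x)).eventually hx)
  · exact Subtype.ext ((hval x 0).2.1 rfl)
  · exact Subtype.ext ((hval x 1).2.2 rfl)

end SimpComplex

/-- Lemma 1.1.  Let `K` be a flag simplicial complex with a base vertex
`v₀`.  If there exists a remoteness function `r` for `v₀` on the set of vertices of `K` that
admits a blocking function `b`, then `K` is contractible. -/
theorem flag_complex_contractible_of_remoteness_blocking
    {V : Type} (K : SimpComplex V) (hflag : K.IsFlag)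
    (v₀ : V) (hv₀ : ({v₀} : Finset V) ∈ K.faces)
    (r : V → ℕ) (hr : K.IsRemoteness v₀ r)
    (b : Multiset V → V → ℕ) (hb : K.IsBlocking r b) :
    K.Contractible := by
  exact (SimpComplex.compactlyNull_of_blocking hflag hv₀ hr hb).contractible hv₀
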